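/- Presburger arithmetic has elimination of imaginaries: for every equivalence relation E on ℤ^m whose graph is definable with parameters in the first-order structure (ℤ, +, −, <, 0, 1), there exists a function f : ℤ^m → ℤ^m whose graph is definable with parameters in (ℤ, +, −, <, 0, 1), such that for all x, y ∈ ℤ^m one has (x, f(x)) ∈ E, and (x, y) ∈ E if and only if f(x) = f(y). -/

import Mathlib

/-!
If a structure carries a definable well-order, then the lexicographic order on its finite powers is
a definable well-order too, and picking the lexicographically least element of each class is a
definable choice of representatives. The usual order of `ℤ` is not a well-order, but the order
`0, -1, 1, -2, 2, …` is, and it is definable: `a` precedes `b` when `a < b` and `0 ≤ a + b`, or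
`b < a` and `a + b < 0`.
-/

open FirstOrder FirstOrder.Language

/-- Function symbols of the Presburger language: `0`, `1`, `+`, `−`. -/
inductive PresburgerFunc : ℕ → Type
  | zero : PresburgerFunc 0
  | one : PresburgerFunc 0
  | add : PresburgerFunc 2
  | sub : PresburgerFunc 2

/-- Relation symbols of the Presburger language: `<`. -/
inductive PresburgerRel : ℕ → Type
  | lt : PresburgerRel 2

/-- The first-order language `(+, −, <, 0, 1)` of Presburger arithmetic. -/
def Presburger : FirstOrder.Language :=
  ⟨PresburgerFunc, PresburgerRel⟩

/-- The standard interpretation of `(+, −, <, 0, 1)` on `ℤ`. -/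
instance : Presburger.Structure ℤ where
  funMap {_} f v :=
    match f with
    | .zero => 0
    | .one => 1
    | .add => v 0 + v 1
    | .sub => v 0 - v 1
  RelMap {_} r v :=
    match r with
    | .lt => v 0 < v 1

theorem eq_wellFounded_min_iff {X : Type*} {r : X → X → Prop} [Std.Trichotomous r]
    (wf : WellFounded r) {s : Set X} (hs : s.Nonempty) {y : X} :
    y = wf.min s hs ↔ y ∈ s ∧ ∀ z ∈ s, ¬r z y := by
  constructor
  · rintro rfl
    exact ⟨wf.min_mem s hs, fun z hz ↦ wf.not_lt_min s hz⟩
  · rintro ⟨hy, hmin⟩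
    exact (wf.min_eq_of_forall_not_lt hy hmin).symm

section Definability

variable {L : FirstOrder.Language} {M : Type*} [L.Structure M] {A : Set M} {α ι : Type*}

theorem definable_ofPred_relMap₂ (R : L.Relations 2) (t u : L.Term α) :
    A.Definable L {v : α → M | Structure.RelMap R ![t.realize v, u.realize v]} := by
  refine Set.Definable.mono (Set.empty_definable_iff.2 ⟨R.formula₂ t u, ?_⟩) (Set.empty_subset A)
  ext v
  exact Formula.realize_rel₂.symm

theorem definable_ofPred_rel_apply {r : M → M → Prop} (hr : A.Definable₂ L {p | r p.1 p.2})
    (a b : α) : A.Definable L {v : α → M | r (v a) (v b)} :=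
  hr.preimage_comp ![a, b]

theorem definable_ofPred_pi_lex [Finite ι] (rι : ι → ι → Prop) {r : M → M → Prop}
    (hr : A.Definable₂ L {p | r p.1 p.2}) (a b : ι → α) :
    A.Definable L {v : α → M | Pi.Lex rι r (fun i ↦ v (a i)) (fun i ↦ v (b i))} := by
  have hEq (i : ι) : A.Definable L {v : α → M | ∀ j : {j // rι j i}, v (a j) = v (b j)} := by
    rw [Set.ofPred_forall]
    exact Set.definable_iInter_of_finite fun j ↦ Set.DefinableFun.ofPred_eq (by fun_prop)
      (by fun_prop)
  have hUnion := Set.definable_iUnion_of_finite fun i ↦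
    (hEq i).inter (definable_ofPred_rel_apply hr (a i) (b i))
  convert! hUnion using 1
  ext v
  simp [Pi.Lex]

theorem definable_ofPred_minimal [Finite ι] {R : (α → M) → (ι → M) → Prop}
    {s : (ι → M) → (ι → M) → Prop}
    (hR : A.Definable L {v : α ⊕ ι → M | R (fun i ↦ v (.inl i)) (fun i ↦ v (.inr i))})
    (hs : A.Definable L {v : ι ⊕ ι → M | s (fun i ↦ v (.inl i)) (fun i ↦ v (.inr i))}) :
    A.Definable L {v : α ⊕ ι → M | R (fun i ↦ v (.inl i)) (fun i ↦ v (.inr i)) ∧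
      ∀ y, R (fun i ↦ v (.inl i)) y → ¬s y (fun i ↦ v (.inr i))} := by
  have hRy : A.Definable L {w : (α ⊕ ι) ⊕ ι → M |
      R (fun i ↦ w (.inl (.inl i))) (fun i ↦ w (.inr i))} :=
    hR.preimage_comp (Sum.map Sum.inl id)
  have hsy : A.Definable L {w : (α ⊕ ι) ⊕ ι → M |
      s (fun i ↦ w (.inr i)) (fun i ↦ w (.inl (.inr i)))} :=
    hs.preimage_comp (Sum.elim Sum.inr (Sum.inl ∘ Sum.inr))
  exact hR.inter (hRy.himp hsy.compl).forall_of_finite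

theorem exists_definable_selector [Finite ι] {r : M → M → Prop} [IsWellOrder M r]
    (hr : A.Definable₂ L {p | r p.1 p.2}) {R : (α → M) → (ι → M) → Prop}
    (hR : A.Definable L {v : α ⊕ ι → M | R (fun i ↦ v (.inl i)) (fun i ↦ v (.inr i))})
    (hne : ∀ x, ∃ y, R x y) :
    ∃ f : (α → M) → (ι → M),
      A.Definable L {v : α ⊕ ι → M | (fun i ↦ v (.inr i)) = f (fun i ↦ v (.inl i))} ∧
      (∀ x, R x (f x)) ∧ ∀ x₁ x₂, R x₁ = R x₂ → f x₁ = f x₂ := by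
  let lex : (ι → M) → (ι → M) → Prop := Pi.Lex WellOrderingRel r
  have wf : WellFounded lex := Pi.Lex.wellFounded _ fun _ ↦ IsWellFounded.wf
  have : Std.Trichotomous lex := Pi.trichotomous_lex _ _ IsWellFounded.wf
  refine ⟨fun x ↦ wf.min {y | R x y} (hne x), ?_, fun x ↦ wf.prop_min (hne x), ?_⟩
  · convert! definable_ofPred_minimal hR
      (definable_ofPred_pi_lex WellOrderingRel hr Sum.inl Sum.inr) using 1
    ext v
    exact eq_wellFounded_min_iff wf _
  · intro x₁ x₂ h
    simp only [h]

theorem presburger_elimination_of_imaginaries_general [Finite ι] {r : M → M → Prop}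
    [IsWellOrder M r] (hr : A.Definable₂ L {p | r p.1 p.2})
    {E : (ι → M) → (ι → M) → Prop} (hE : Equivalence E)
    (hEdef : A.Definable L {z : ι ⊕ ι → M | E (fun i ↦ z (.inl i)) (fun i ↦ z (.inr i))}) :
    ∃ f : (ι → M) → (ι → M),
      A.Definable L {z : ι ⊕ ι → M | (fun i ↦ z (.inr i)) = f (fun i ↦ z (.inl i))} ∧
      (∀ x, E x (f x)) ∧ ∀ x y, E x y ↔ f x = f y := by
  obtain ⟨f, hfdef, hf, hinv⟩ := exists_definable_selector hr hEdef fun x ↦ ⟨x, hE.refl x⟩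
  refine ⟨f, hfdef, hf, fun x y ↦ ⟨fun hxy ↦ hinv x y ?_, fun hfxy ↦ ?_⟩⟩
  · ext z
    exact ⟨hE.trans (hE.symm hxy), hE.trans hxy⟩
  · exact hE.trans (hf x) (hfxy ▸ hE.symm (hf y))

end Definability

section Presburger

variable {A : Set ℤ}

theorem definable_ofPred_realize_lt {α : Type*} (t u : Presburger.Term α) :
    A.Definable Presburger {v : α → ℤ | t.realize v < u.realize v} :=
  definable_ofPred_relMap₂ (L := Presburger) PresburgerRel.lt t u

theorem intEquivNat_lt_intEquivNat_iff (a b : ℤ) :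
    Equiv.intEquivNat a < Equiv.intEquivNat b ↔
      (a < b ∧ ¬a + b < 0) ∨ (b < a ∧ a + b < 0) := by
  have hnonneg (n : ℕ) : Equiv.intEquivNat n = 2 * n := rfl
  have hneg (n : ℕ) : Equiv.intEquivNat (.negSucc n) = 2 * n + 1 := rfl
  cases a <;> cases b <;> simp only [Int.ofNat_eq_natCast, hnonneg, hneg] <;> omega

theorem definable₂_intEquivNat_preimage_lt :
    A.Definable₂ Presburger {p | Order.Preimage Equiv.intEquivNat (· < ·) p.1 p.2} := by
  let x : Presburger.Term (Fin 2) := .var 0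
  let y : Presburger.Term (Fin 2) := .var 1
  let zero : Presburger.Term (Fin 2) := Constants.term (L := Presburger) PresburgerFunc.zero
  let sum : Presburger.Term (Fin 2) :=
    Functions.apply₂ (L := Presburger) PresburgerFunc.add x y
  have hsum : A.Definable Presburger {v : Fin 2 → ℤ | v 0 + v 1 < 0} :=
    definable_ofPred_realize_lt sum zero
  have hxy : A.Definable Presburger {v : Fin 2 → ℤ | v 0 < v 1} := definable_ofPred_realize_lt x y
  have hyx : A.Definable Presburger {v : Fin 2 → ℤ | v 1 < v 0} := definable_ofPred_realize_lt y x
  rw [Set.Definable₂]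
  convert! (hxy.inter hsum.compl).union (hyx.inter hsum) using 1
  ext v
  exact intEquivNat_lt_intEquivNat_iff (v 0) (v 1)

end Presburger

/-- Presburger arithmetic has elimination of imaginaries: for every equivalence relation `E` on
`ℤ^m` whose graph is definable with parameters in `(ℤ, +, −, <, 0, 1)` there is a function
`f : ℤ^m → ℤ^m` with definable graph such that `(x, f x) ∈ E` for all `x`, and
`(x, y) ∈ E ↔ f x = f y`. -/
theorem presburger_elimination_of_imaginaries (m : ℕ)
    (E : (Fin m → ℤ) → (Fin m → ℤ) → Prop) (hE : Equivalence E)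
    (hEdef : (Set.univ : Set ℤ).Definable Presburger
      {z : (Fin m ⊕ Fin m) → ℤ | E (fun i => z (Sum.inl i)) (fun i => z (Sum.inr i))}) :
    ∃ f : (Fin m → ℤ) → (Fin m → ℤ),
      (Set.univ : Set ℤ).Definable Presburger
        {z : (Fin m ⊕ Fin m) → ℤ | (fun i => z (Sum.inr i)) = f (fun i => z (Sum.inl i))} ∧
      (∀ x : Fin m → ℤ, E x (f x)) ∧
      (∀ x y : Fin m → ℤ, E x y ↔ f x = f y) :=
  presburger_elimination_of_imaginaries_general definable₂_intEquivNat_preimage_lt hE hEdef
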